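/- The following are equivalent: (i) U is the only copy for G; (ii) every function adherent to G is a bijection of U onto U; (iii) for every finite F ⊆ U, every function adherent to the pointwise stabilizer G⟨F⟩ is a bijection of U onto U; (iv) for some finite F ⊆ U, every function adherent to G⟨F⟩ is a bijection of U onto U. -/

import Mathlib

/-- `f` is adherent to the subgroup `G` of permutations of `U`:
for every finite set `F` there is `g ∈ G` agreeing with `f` on `F`. -/
def IsAdherent {U : Type*} (G : Subgroup (Equiv.Perm U)) (f : U → U) : Prop :=
  ∀ F : Finset U, ∃ g ∈ G, ∀ x ∈ F, f x = g x

/-- `C` is a copy for the group `G`: the range of a function adherent to `G`. -/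
def IsCopy {U : Type*} (G : Subgroup (Equiv.Perm U)) (C : Set U) : Prop :=
  ∃ f : U → U, IsAdherent G f ∧ Set.range f = C

/-- `f` is adherent to a set `X` of functions `U → U`. -/
def AdhTo {U : Type*} (X : Set (U → U)) (f : U → U) : Prop :=
  ∀ F : Finset U, ∃ g ∈ X, ∀ x ∈ F, f x = g x

/-! For finite `F`, a function `f` adherent to `G` agrees on `F` with some `g ∈ G`, so `f = g ∘ k`
where `k = g⁻¹ ∘ f` is adherent to the stabilizer `G⟨F⟩`; hence `f` is bijective as soon as `k` is.
Adherent functions are injective, so `f` is bijective exactly when its copy `f[U]` is all of `U`. -/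

section Adherence

variable {U : Type*} {X : Set (U → U)} {G H : Subgroup (Equiv.Perm U)} {f : U → U}

theorem AdhTo.injective (hX : ∀ g ∈ X, Function.Injective g) (hf : AdhTo X f) :
    Function.Injective f := by
  classical
  intro x y hxy
  obtain ⟨g, hgX, hfg⟩ := hf {x, y}
  have hgx : f x = g x := hfg x (by simp)
  have hgy : f y = g y := hfg y (by simp)
  exact hX g hgX (by rw [← hgx, ← hgy, hxy])

theorem adhTo_image_coe_iff : AdhTo ((⇑) '' (G : Set (Equiv.Perm U))) f ↔ IsAdherent G f := by
  simp only [AdhTo, IsAdherent, Set.exists_mem_image, SetLike.mem_coe]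

theorem IsAdherent.injective (hf : IsAdherent G f) : Function.Injective f :=
  (adhTo_image_coe_iff.mpr hf).injective (Set.forall_mem_image.mpr fun g _ => g.injective)

theorem IsAdherent.mono (hGH : G ≤ H) (hf : IsAdherent G f) : IsAdherent H f := fun E =>
  let ⟨g, hgG, hfg⟩ := hf E
  ⟨g, hGH hgG, hfg⟩

theorem forall_isCopy_eq_univ_iff :
    (∀ C : Set U, IsCopy G C → C = Set.univ) ↔
      ∀ f : U → U, IsAdherent G f → Function.Bijective f := by
  constructor
  · intro h f hf
    exact ⟨hf.injective, Set.range_eq_univ.mp (h _ ⟨f, hf, rfl⟩)⟩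
  · rintro h _ ⟨f, hf, rfl⟩
    exact (h f hf).surjective.range_eq

end Adherence

section PointwiseStabilizer

variable {U : Type*} {G : Subgroup (Equiv.Perm U)} {f : U → U}

/-- The pointwise stabilizer `G⟨s⟩` of a set `s` in `G`, as a subgroup of the full symmetric group
rather than of `G`, so that adherence to it makes sense. -/
def pointwiseStabilizer (G : Subgroup (Equiv.Perm U)) (s : Set U) : Subgroup (Equiv.Perm U) :=
  G ⊓ fixingSubgroup (Equiv.Perm U) s

theorem mem_pointwiseStabilizer_iff {s : Set U} {g : Equiv.Perm U} :
    g ∈ pointwiseStabilizer G s ↔ g ∈ G ∧ ∀ x ∈ s, g x = x := by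
  simp only [pointwiseStabilizer, Subgroup.mem_inf, mem_fixingSubgroup_iff, Equiv.Perm.smul_def]

theorem pointwiseStabilizer_le (G : Subgroup (Equiv.Perm U)) (s : Set U) :
    pointwiseStabilizer G s ≤ G :=
  inf_le_left

theorem adhTo_setOf_fixing_iff {s : Set U} :
    AdhTo {h : U → U | ∃ g ∈ G, (∀ x ∈ s, g x = x) ∧ ⇑g = h} f ↔
      IsAdherent (pointwiseStabilizer G s) f := by
  rw [← adhTo_image_coe_iff]
  simp only [Set.image, SetLike.mem_coe, mem_pointwiseStabilizer_iff, and_assoc]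

theorem IsAdherent.inv_comp_pointwiseStabilizer (hf : IsAdherent G f) {F : Finset U}
    {g : Equiv.Perm U} (hgG : g ∈ G) (hfg : ∀ x ∈ F, f x = g x) :
    IsAdherent (pointwiseStabilizer G (F : Set U)) (⇑g⁻¹ ∘ f) := by
  classical
  intro E
  obtain ⟨k, hkG, hfk⟩ := hf (F ∪ E)
  have hgk_fixes : ∀ x ∈ F, (g⁻¹ * k) x = x := fun x hx =>
    Equiv.Perm.inv_eq_iff_eq.mpr ((hfk x (Finset.mem_union_left E hx)).symm.trans (hfg x hx))
  exact ⟨g⁻¹ * k, mem_pointwiseStabilizer_iff.mpr ⟨G.mul_mem (G.inv_mem hgG) hkG, hgk_fixes⟩,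
    fun x hx => congrArg ⇑g⁻¹ (hfk x (Finset.mem_union_right F hx))⟩

theorem IsAdherent.exists_eq_comp_pointwiseStabilizer (hf : IsAdherent G f) (F : Finset U) :
    ∃ g ∈ G, ∃ k : U → U, IsAdherent (pointwiseStabilizer G (F : Set U)) k ∧ f = g ∘ k := by
  obtain ⟨g, hgG, hfg⟩ := hf F
  exact ⟨g, hgG, ⇑g⁻¹ ∘ f, hf.inv_comp_pointwiseStabilizer hgG hfg,
    funext fun x => (g.apply_symm_apply (f x)).symm⟩

end PointwiseStabilizer

theorem only_copy_tfae_general {U : Type*} (G : Subgroup (Equiv.Perm U)) :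
    List.TFAE
      [∀ C : Set U, IsCopy G C → C = Set.univ,
       ∀ f : U → U, IsAdherent G f → Function.Bijective f,
       ∀ F : Finset U, ∀ f : U → U,
         AdhTo {h : U → U | ∃ g ∈ G, (∀ x ∈ F, g x = x) ∧ ⇑g = h} f →
           Function.Bijective f,
       ∃ F : Finset U, ∀ f : U → U,
         AdhTo {h : U → U | ∃ g ∈ G, (∀ x ∈ F, g x = x) ∧ ⇑g = h} f →
           Function.Bijective f] := by
  simp only [← Finset.mem_coe, adhTo_setOf_fixing_iff]
  tfae_have 1 ↔ 2 := forall_isCopy_eq_univ_iff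
  tfae_have 2 → 3 := fun h F f hf => h f (hf.mono (pointwiseStabilizer_le G F))
  tfae_have 3 → 4 := fun h => ⟨∅, h ∅⟩
  tfae_have 4 → 2 := by
    rintro ⟨F, h⟩ f hf
    obtain ⟨g, -, k, hk, rfl⟩ := hf.exists_eq_comp_pointwiseStabilizer F
    exact g.bijective.comp (h k hk)
  tfae_finish

/-- Theorem: the following are equivalent:
(i) `U` is the only copy for `G`;
(ii) every function adherent to `G` is a bijection;
(iii) for every finite `F`, every function adherent to the pointwise stabilizer
of `F` is a bijection;
(iv) for some finite `F`, every function adherent to the pointwise stabilizer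
of `F` is a bijection. -/
theorem only_copy_tfae {U : Type*} [Countable U] [Infinite U]
    (G : Subgroup (Equiv.Perm U)) :
    List.TFAE
      [∀ C : Set U, IsCopy G C → C = Set.univ,
       ∀ f : U → U, IsAdherent G f → Function.Bijective f,
       ∀ F : Finset U, ∀ f : U → U,
         AdhTo {h : U → U | ∃ g ∈ G, (∀ x ∈ F, g x = x) ∧ ⇑g = h} f →
           Function.Bijective f,
       ∃ F : Finset U, ∀ f : U → U,
         AdhTo {h : U → U | ∃ g ∈ G, (∀ x ∈ F, g x = x) ∧ ⇑g = h} f →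
           Function.Bijective f] := by
  exact only_copy_tfae_general G
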